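/- (Deterministic core of Theorem 4.2: HybridPeel with accurate estimates achieves a (1−ε)²/(k(1+ξ)(1+ε)²)-approximation.) Let (I, vtx, w) be a weighted k-instance family on a nonempty finite vertex set V, let ε ∈ (0,1), ξ > 0, and J ≥ 1. Define W_1 = V and, for i = 1, …, J with W_i nonempty, let f_i : W_i → ℝ satisfy (1−ε)·deg_{W_i}(u) ≤ f_i(u) ≤ (1+ε)·deg_{W_i}(u) for all u ∈ W_i, set ĥ_i = (1/k)·∑_{u ∈ W_i} f_i(u) and W_{i+1} = W_i ∖ {u ∈ W_i : f_i(u) ≤ k(1+ξ)·ĥ_i/|W_i|}. Then greedily peel W_{J+1}: let W_{J+1} = U_{|W_{J+1}|} ⊋ U_{|W_{J+1}|−1} ⊋ ⋯ ⊋ U_1 be a chain where each U_{j−1} = U_j ∖ {u_j} for some u_j ∈ U_j of minimum deg_{U_j} over U_j, and let W' be a set among the U_j (nonempty) maximizing ρ. Let W be a set among {W_1, …, W_J, W'} maximizing the score, where the score of W_i is ĥ_i/|W_i| for i ≤ J and the score of W' is ρ(W'). Then for every optimal W*, ρ(W) ≥ (1−ε)²/(k(1+ξ)(1+ε)²) ·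 ρ(W*). -/

import Mathlib

/-!
In an optimal set `Wstar` every vertex `u` has induced degree at least `ρ(Wstar)`, since otherwise
deleting `u` would raise the density (`rhoW_le_degW_of_optimal`). Consider the first moment at
which one of the two phases removes a vertex `u ∈ Wstar`; up to then the current set contains
`Wstar`, so the degree of `u` in it is at least `ρ(Wstar)`.

* In a batch iteration, the removal criterion `f_i(u) ≤ k(1+ξ)ĥ_i/|W_i|` bounds the score of `W_i`
  below by `(1-ε)ρ(Wstar)/(k(1+ξ))`.
* In the greedy phase, `u` has minimum degree in `U_j`, so the handshake identity
  `∑ deg = k τ` (`sum_degW`) gives `ρ(U_j) ≥ ρ(Wstar)/k` (`exists_peel`).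

Either way the maximal score is at least `(1-ε)ρ(Wstar)/(k(1+ξ))`. A score exceeds the true density
by a factor of at most `1+ε`, and `(1-ε)/(1+ε) ≤ 1` then yields the stated constant.
-/


open Finset MeasureTheory

open scoped Classical

variable {α ι : Type*} [DecidableEq α]

noncomputable def tauW (I : Finset ι) (vtx : ι → Finset α) (w : ι → ℝ) (W : Finset α) : ℝ :=
  ∑ i ∈ I.filter (fun i => vtx i ⊆ W), w i

noncomputable def degW (I : Finset ι) (vtx : ι → Finset α) (w : ι → ℝ) (W : Finset α)
    (v : α) : ℝ :=
  ∑ i ∈ I.filter (fun i => vtx i ⊆ W ∧ v ∈ vtx i), w i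

noncomputable def rhoW (I : Finset ι) (vtx : ι → Finset α) (w : ι → ℝ) (W : Finset α) : ℝ :=
  tauW I vtx w W / (W.card : ℝ)

def OptimalTMDS (I : Finset ι) (vtx : ι → Finset α) (w : ι → ℝ) (V Wstar : Finset α) : Prop :=
  Wstar ⊆ V ∧ Wstar.Nonempty ∧
    ∀ W ⊆ V, W.Nonempty → rhoW I vtx w W ≤ rhoW I vtx w Wstar

noncomputable def batchL (k : ℕ) (ξ : ℝ) (I : Finset ι) (vtx : ι → Finset α) (w : ι → ℝ)
    (W : Finset α) : Finset α :=
  W.filter (fun v => degW I vtx w W v ≤ (k : ℝ) * (1 + ξ) * tauW I vtx w W / (W.card : ℝ))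

/-- Handshake identity: each instance inside `W` is counted once at each of its `k` vertices. -/
lemma sum_degW (k : ℕ) (I : Finset ι) (vtx : ι → Finset α) (w : ι → ℝ)
    (hcard : ∀ i ∈ I, (vtx i).card = k) (W : Finset α) :
    ∑ v ∈ W, degW I vtx w W v = k * tauW I vtx w W := by
  unfold degW tauW
  simp_rw [← Finset.filter_filter, Finset.sum_filter (fun i => _ ∈ vtx i)]
  rw [Finset.sum_comm, Finset.mul_sum]
  refine Finset.sum_congr rfl fun i hi => ?_
  rw [Finset.mem_filter] at hi
  rw [← Finset.sum_filter, Finset.filter_mem_eq_inter, Finset.inter_eq_right.2 hi.2,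
    Finset.sum_const, hcard i hi.1, nsmul_eq_mul]

lemma tauW_erase (I : Finset ι) (vtx : ι → Finset α) (w : ι → ℝ) (W : Finset α) (u : α) :
    tauW I vtx w (W.erase u) = tauW I vtx w W - degW I vtx w W u := by
  unfold tauW degW
  rw [eq_sub_iff_add_eq,
    ← Finset.sum_filter_add_sum_filter_not (I.filter fun i => vtx i ⊆ W) (fun i => u ∈ vtx i),
    Finset.filter_filter, Finset.filter_filter, add_comm]
  simp_rw [Finset.subset_erase]

lemma degW_mono (I : Finset ι) (vtx : ι → Finset α) (w : ι → ℝ) (hw : ∀ i ∈ I, 0 ≤ w i)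
    {A B : Finset α} (h : A ⊆ B) (u : α) : degW I vtx w A u ≤ degW I vtx w B u := by
  unfold degW
  refine Finset.sum_le_sum_of_subset_of_nonneg (fun i hi => ?_) fun i hi _ =>
    hw i (Finset.mem_filter.1 hi).1
  rw [Finset.mem_filter] at hi ⊢
  exact ⟨hi.1, hi.2.1.trans h, hi.2.2⟩

lemma rhoW_nonneg (I : Finset ι) (vtx : ι → Finset α) (w : ι → ℝ) (hw : ∀ i ∈ I, 0 ≤ w i)
    (W : Finset α) : 0 ≤ rhoW I vtx w W :=
  div_nonneg (Finset.sum_nonneg fun i hi => hw i (Finset.mem_filter.1 hi).1) (Nat.cast_nonneg _)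

/-- Deleting `u` from an optimal set does not raise the density, which forces the degree of `u`
to be at least the density. -/
lemma rhoW_le_degW_of_optimal (k : ℕ) (hk : 2 ≤ k) (V : Finset α) (I : Finset ι)
    (vtx : ι → Finset α) (w : ι → ℝ) (hcard : ∀ i ∈ I, (vtx i).card = k)
    (S : Finset α) (hopt : OptimalTMDS I vtx w V S) (u : α) (hu : u ∈ S) :
    rhoW I vtx w S ≤ degW I vtx w S u := by
  obtain ⟨hSV, hS, hmax⟩ := hopt
  have hpos : (0 : ℝ) < S.card := by exact_mod_cast hS.card_pos
  have hτ : tauW I vtx w S = rhoW I vtx w S * S.card := by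
    unfold rhoW; field_simp
  have hc : ((S.erase u).card : ℝ) = S.card - 1 := by
    rw [← Finset.card_erase_add_one hu]; push_cast; ring
  have key : tauW I vtx w (S.erase u) ≤ rhoW I vtx w S * (S.erase u).card := by
    rcases (S.erase u).eq_empty_or_nonempty with he | hne
    · -- every instance has `k ≥ 2` vertices, so none lies in the empty set
      have h0 : tauW I vtx w ∅ = 0 := by
        unfold tauW
        refine Finset.sum_eq_zero fun i hi => ?_
        rw [Finset.mem_filter, Finset.subset_empty] at hi
        have := hcard i hi.1
        rw [hi.2, Finset.card_empty] at this
        omega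
      rw [he, h0]; simp
    · have h1 := hmax _ ((Finset.erase_subset u S).trans hSV) hne
      have h2 : (0 : ℝ) < (S.erase u).card := by exact_mod_cast hne.card_pos
      exact (div_le_iff₀ h2).1 h1
  rw [tauW_erase, hτ, hc] at key
  linarith

/-- If greedy peeling starts from a set containing `S`, and all degrees in `S` are at least `ρ(S)`,
then some set of the chain has density at least `ρ(S)/k`: the last one that contains `S`. -/
lemma exists_peel (k : ℕ) (hk : 2 ≤ k) (I : Finset ι) (vtx : ι → Finset α) (w : ι → ℝ)
    (hcard : ∀ i ∈ I, (vtx i).card = k) (hw : ∀ i ∈ I, 0 ≤ w i)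
    (S : Finset α) (hS : S.Nonempty) (hdeg : ∀ u ∈ S, rhoW I vtx w S ≤ degW I vtx w S u)
    (U : ℕ → Finset α) (us : ℕ → α) (n : ℕ) (hn : 1 ≤ n)
    (hstep : ∀ j, 2 ≤ j → j ≤ n → us j ∈ U j ∧
      (∀ x ∈ U j, degW I vtx w (U j) (us j) ≤ degW I vtx w (U j) x) ∧
      U (j - 1) = (U j).erase (us j))
    (hc : (U n).card = n) (hSU : S ⊆ U n) :
    ∃ j, 1 ≤ j ∧ j ≤ n ∧ (U j).Nonempty ∧ rhoW I vtx w S ≤ k * rhoW I vtx w (U j) := by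
  have hk' : (2 : ℝ) ≤ k := by exact_mod_cast hk
  induction n, hn using Nat.le_induction with
  | base =>
    have hEq : S = U 1 := Finset.eq_of_subset_of_card_le hSU (hc.le.trans hS.card_pos)
    refine ⟨1, le_rfl, le_rfl, hEq ▸ hS, ?_⟩
    rw [← hEq]
    nlinarith [rhoW_nonneg I vtx w hw S]
  | succ n hn ih =>
    obtain ⟨h1, h2, h3⟩ := hstep (n + 1) (by omega) le_rfl
    rw [Nat.add_sub_cancel] at h3
    by_cases hu : us (n + 1) ∈ S
    · have hne : (U (n + 1)).Nonempty := ⟨_, h1⟩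
      refine ⟨n + 1, by omega, le_rfl, hne, ?_⟩
      have hpos : (0 : ℝ) < (U (n + 1)).card := by exact_mod_cast hne.card_pos
      have hsum := Finset.card_nsmul_le_sum (U (n + 1)) (degW I vtx w (U (n + 1)))
        (rhoW I vtx w S) fun x hx =>
          ((hdeg _ hu).trans (degW_mono I vtx w hw hSU _)).trans (h2 x hx)
      rw [sum_degW k I vtx w hcard, nsmul_eq_mul] at hsum
      unfold rhoW at hsum ⊢
      rw [← mul_div_assoc, le_div_iff₀ hpos]
      linarith
    · obtain ⟨j, hj1, hj2, hj⟩ := ih (fun j a b => hstep j a (by omega))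
        (by rw [h3, Finset.card_erase_of_mem h1, hc, Nat.add_sub_cancel])
        (by rw [h3, Finset.subset_erase]; exact ⟨hSU, hu⟩)
      exact ⟨j, hj1, by omega, hj⟩

/-- Deterministic core of Theorem 4.2 (HybridPeel): `J` batch-peeling
iterations with `(1±ε)`-accurate degree estimates, followed by exact greedy peeling of
`W_{J+1}`; the returned set `W` (maximizing the score, where the score of `W_i` is
`ĥ_i/|W_i|` and the score of the greedy solution `W'` is `ρ(W')`) satisfies
`ρ(W) ≥ (1−ε)²/(k(1+ξ)(1+ε)²) · ρ(W*)` for every optimal `W*`. -/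
theorem stmt16
    (k : ℕ) (hk : 2 ≤ k)
    (V : Finset α) (I : Finset ι) (vtx : ι → Finset α) (w : ι → ℝ)
    (hvtx : ∀ i ∈ I, vtx i ⊆ V) (hcard : ∀ i ∈ I, (vtx i).card = k)
    (hw : ∀ i ∈ I, 0 ≤ w i)
    (hV : V.Nonempty)
    (ε ξ : ℝ) (hε : ε ∈ Set.Ioo (0 : ℝ) 1) (hξ : 0 < ξ)
    (J : ℕ) (hJ : 1 ≤ J)
    (Wc : ℕ → Finset α) (f : ℕ → α → ℝ)
    (hW1 : Wc 1 = V)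
    (hacc : ∀ i, 1 ≤ i → i ≤ J → ∀ u ∈ Wc i,
      (1 - ε) * degW I vtx w (Wc i) u ≤ f i u ∧
        f i u ≤ (1 + ε) * degW I vtx w (Wc i) u)
    (hstep : ∀ i, 1 ≤ i → i ≤ J → Wc (i + 1) = (Wc i).filter (fun u =>
      ¬ f i u ≤ (k : ℝ) * (1 + ξ) * ((1 / (k : ℝ)) * ∑ x ∈ Wc i, f i x) / ((Wc i).card : ℝ)))
    (U : ℕ → Finset α) (us : ℕ → α)
    (hUtop : U (Wc (J + 1)).card = Wc (J + 1))
    (hUstep : ∀ j, 2 ≤ j → j ≤ (Wc (J + 1)).card →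
      us j ∈ U j ∧
        (∀ x ∈ U j, degW I vtx w (U j) (us j) ≤ degW I vtx w (U j) x) ∧
        U (j - 1) = (U j).erase (us j))
    (W' : Finset α)
    (hW'mem : ∃ j', 1 ≤ j' ∧ j' ≤ (Wc (J + 1)).card ∧ W' = U j' ∧ (U j').Nonempty)
    (hW'max : ∀ j, 1 ≤ j → j ≤ (Wc (J + 1)).card → (U j).Nonempty →
      rhoW I vtx w (U j) ≤ rhoW I vtx w W')
    (W : Finset α)
    (hWsel :
      (∃ i0, 1 ≤ i0 ∧ i0 ≤ J ∧ W = Wc i0 ∧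
        (∀ i, 1 ≤ i → i ≤ J →
          ((1 / (k : ℝ)) * ∑ x ∈ Wc i, f i x) / ((Wc i).card : ℝ)
            ≤ ((1 / (k : ℝ)) * ∑ x ∈ Wc i0, f i0 x) / ((Wc i0).card : ℝ)) ∧
        rhoW I vtx w W'
          ≤ ((1 / (k : ℝ)) * ∑ x ∈ Wc i0, f i0 x) / ((Wc i0).card : ℝ)) ∨
      (W = W' ∧ ∀ i, 1 ≤ i → i ≤ J →
        ((1 / (k : ℝ)) * ∑ x ∈ Wc i, f i x) / ((Wc i).card : ℝ) ≤ rhoW I vtx w W'))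
    (Wstar : Finset α) (hopt : OptimalTMDS I vtx w V Wstar) :
    (1 - ε) ^ 2 / ((k : ℝ) * (1 + ξ) * (1 + ε) ^ 2) * rhoW I vtx w Wstar
      ≤ rhoW I vtx w W := by
  have hk' : (2 : ℝ) ≤ k := by exact_mod_cast hk
  have hk0 : (0 : ℝ) < k := by linarith
  obtain ⟨hε0, hε1⟩ := hε
  have hdeg := rhoW_le_degW_of_optimal k hk V I vtx w hcard Wstar hopt
  obtain ⟨hSV, hS, hmax⟩ := hopt
  set r := rhoW I vtx w Wstar with hr
  have hr0 : 0 ≤ r := rhoW_nonneg I vtx w hw Wstar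
  obtain ⟨j', hj'1, hj'2, -, -⟩ := hW'mem
  -- a score exceeds the density by a factor of at most `1 + ε`
  have hscore : ∀ i, 1 ≤ i → i ≤ J →
      ((1 / (k : ℝ)) * ∑ x ∈ Wc i, f i x) / ((Wc i).card : ℝ)
        ≤ (1 + ε) * rhoW I vtx w (Wc i) := by
    intro i h1 h2
    have h := Finset.sum_le_sum fun u hu => (hacc i h1 h2 u hu).2
    rw [← Finset.mul_sum, sum_degW k I vtx w hcard] at h
    unfold rhoW
    rw [← mul_div_assoc]
    refine div_le_div_of_nonneg_right ?_ (Nat.cast_nonneg _)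
    rw [one_div, inv_mul_le_iff₀ hk0]
    linarith
  -- either a batch iteration is the first to hit `Wstar`, or `Wstar` survives all of them
  have hfirst : ∀ n, n ≤ J →
      (∃ i, 1 ≤ i ∧ i ≤ n ∧ Wstar ⊆ Wc i ∧ ¬ Wstar ⊆ Wc (i + 1)) ∨ Wstar ⊆ Wc (n + 1) := by
    intro n
    induction n with
    | zero => intro _; right; rw [zero_add, hW1]; exact hSV
    | succ n ih =>
      intro hn
      rcases ih (by omega) with ⟨i, a, b, c⟩ | h
      · exact Or.inl ⟨i, a, by omega, c⟩
      · by_cases h' : Wstar ⊆ Wc (n + 1 + 1)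
        · exact Or.inr h'
        · exact Or.inl ⟨n + 1, by omega, le_rfl, h, h'⟩
  have hbest : (∃ i, 1 ≤ i ∧ i ≤ J ∧ (1 - ε) * r ≤ k * (1 + ξ) *
        (((1 / (k : ℝ)) * ∑ x ∈ Wc i, f i x) / ((Wc i).card : ℝ))) ∨
      (1 - ε) * r ≤ k * (1 + ξ) * rhoW I vtx w W' := by
    rcases hfirst J le_rfl with ⟨i, h1, h2, hsub, hnot⟩ | hsub
    · left
      refine ⟨i, h1, h2, ?_⟩
      obtain ⟨u, hu, hu'⟩ := Finset.not_subset.1 hnot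
      rw [hstep i h1 h2, Finset.mem_filter] at hu'
      have hle := not_not.1 fun h => hu' ⟨hsub hu, h⟩
      rw [mul_div_assoc] at hle
      have hd := (hdeg u hu).trans (degW_mono I vtx w hw hsub u)
      have := mul_le_mul_of_nonneg_left hd (by linarith : 0 ≤ 1 - ε)
      linarith [(hacc i h1 h2 u (hsub hu)).1]
    · right
      obtain ⟨j, hj1, hj2, hne, hj⟩ := exists_peel k hk I vtx w hcard hw Wstar hS hdeg U us
        (Wc (J + 1)).card (hj'1.trans hj'2) hUstep (by rw [hUtop]) (by rwa [hUtop])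
      have h1 := mul_le_mul_of_nonneg_left (hW'max j hj1 hj2 hne) hk0.le
      have h2 : 0 ≤ k * rhoW I vtx w W' := mul_nonneg hk0.le (rhoW_nonneg I vtx w hw W')
      nlinarith [mul_nonneg hξ.le h2, mul_nonneg hε0.le hr0]
  have hkξ : 0 < k * (1 + ξ) := by positivity
  have hρ0 := rhoW_nonneg I vtx w hw W
  have hfin : (1 - ε) * r ≤ k * (1 + ξ) * ((1 + ε) * rhoW I vtx w W) := by
    rcases hWsel with ⟨i0, a, b, rfl, hm, hm'⟩ | ⟨rfl, hm⟩
    · have hs := hscore i0 a b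
      rcases hbest with ⟨i, h1, h2, h⟩ | h
      · exact h.trans (mul_le_mul_of_nonneg_left ((hm i h1 h2).trans hs) hkξ.le)
      · exact h.trans (mul_le_mul_of_nonneg_left (hm'.trans hs) hkξ.le)
    · have hs : rhoW I vtx w W ≤ (1 + ε) * rhoW I vtx w W := by nlinarith
      rcases hbest with ⟨i, h1, h2, h⟩ | h
      · exact h.trans (mul_le_mul_of_nonneg_left ((hm i h1 h2).trans hs) hkξ.le)
      · exact h.trans (mul_le_mul_of_nonneg_left hs hkξ.le)
  rw [div_mul_eq_mul_div, div_le_iff₀ (by positivity)]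
  -- the remaining factor is `1 - ε ≤ 1 + ε`
  calc (1 - ε) ^ 2 * r = (1 - ε) * ((1 - ε) * r) := by ring
    _ ≤ (1 + ε) * (k * (1 + ξ) * ((1 + ε) * rhoW I vtx w W)) :=
        mul_le_mul (by linarith) hfin (mul_nonneg (by linarith) hr0) (by linarith)
    _ = rhoW I vtx w W * (k * (1 + ξ) * (1 + ε) ^ 2) := by ring
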